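/- Let C ⊆ ℝ² be a simple closed curve (i.e., the image of a continuous map from the circle to ℝ² that is injective), let x and y be two distinct points of C, and let P ⊆ ℝ² be the image of an injective continuous path from x to y such that P ∩ C = {x, y}. Then the complement ℝ² \ (C ∪ P) has exactly three connected components. -/

import Mathlib

namespace Theta
open Set Topology Complex

/-- homotopy lifting through exp -/
lemma lift_homotopy {X : Type*} [TopologicalSpace X] (H : unitInterval × X → ℂ) (hH : Continuous H)
    (h0 : ∀ p, H p ≠ 0) (g : X → ℂ) (hg : Continuous g) (hg0 : ∀ a, H (0, a) = exp (g a)) :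
    ∃ G : unitInterval × X → ℂ, Continuous G ∧ (∀ p, H p = exp (G p)) ∧ ∀ a, G (0, a) = g a := by
  let H' : C(unitInterval × X, {z : ℂ // z ≠ 0}) :=
    ⟨fun p => ⟨H p, h0 p⟩, by fun_prop⟩
  let f : C(X, ℂ) := ⟨g, hg⟩
  have H0 : ∀ a, H' (0, a) = (fun z : ℂ ↦ (⟨_, z.exp_ne_zero⟩ : {z : ℂ // z ≠ 0})) (f a) := by
    intro a; apply Subtype.ext; exact hg0 a
  refine ⟨isCoveringMap_exp.liftHomotopy H' f H0, ContinuousMap.continuous _, ?_, ?_⟩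
  · intro p
    have := congrFun (isCoveringMap_exp.liftHomotopy_lifts H' f H0) p
    exact (congrArg Subtype.val this).symm
  · intro a; exact isCoveringMap_exp.liftHomotopy_zero H' f H0 a

lemma log_plane (F : ℂ → ℂ) (hF : Continuous F) (h0 : ∀ z, F z ≠ 0) :
    ∃ L : ℂ → ℂ, Continuous L ∧ ∀ z, F z = exp (L z) := by
  obtain ⟨G, hG, h1, -⟩ := lift_homotopy (fun p : unitInterval × ℂ => F ((p.1 : ℝ) * p.2))
    (by fun_prop) (fun p => h0 _) (fun _ => log (F 0)) (by fun_prop)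
    (fun a => by simp [exp_log (h0 0)])
  exact ⟨fun z => G (1, z), by fun_prop, fun z => by simpa using h1 (1, z)⟩

lemma log_path (F : unitInterval → ℂ) (hF : Continuous F) (h0 : ∀ z, F z ≠ 0) (c : ℂ)
    (hc : F 0 = exp c) :
    ∃ L : unitInterval → ℂ, Continuous L ∧ (∀ z, F z = exp (L z)) ∧ L 0 = c := by
  obtain ⟨G, hG, h1, h2⟩ := lift_homotopy (fun p : unitInterval × Unit => F p.1)
    (by fun_prop) (fun p => h0 _) (fun _ => c) (by fun_prop)
    (fun a => by simp [hc])
  exact ⟨fun z => G (z, ()), by fun_prop, fun z => by simpa using h1 (z, ()), h2 ()⟩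

/-- log of `(z-x)/(z-y)` off an arc from x to y -/
lemma log_off_arc (a : unitInterval → ℂ) (ha : Continuous a) :
    ∃ g : ℂ → ℂ, ContinuousOn g (range a)ᶜ ∧
      ∀ z ∈ (range a)ᶜ, (z - a 0) / (z - a 1) = exp (g z) := by
  classical
  have hne : ∀ (z : ↥(range a)ᶜ) t, (z : ℂ) - a t ≠ 0 := fun z t h =>
    z.2 ⟨t, (sub_eq_zero.1 h).symm⟩
  obtain ⟨G, hG, h1, h2⟩ := lift_homotopy
    (fun p : unitInterval × ↥(range a)ᶜ => ((p.2 : ℂ) - a (unitInterval.symm p.1)) / (p.2 - a 1))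
    (by
      apply Continuous.div
      · fun_prop
      · fun_prop
      · intro p; exact hne _ _)
    (fun p => div_ne_zero (hne _ _) (hne _ _)) (fun _ => 0) (by fun_prop)
    (fun z => by simp [div_self (hne z 1)])
  refine ⟨fun z => if h : z ∈ (range a)ᶜ then G (1, ⟨z, h⟩) else 0, ?_, ?_⟩
  · rw [continuousOn_iff_continuous_domRestrict]
    have : (range a)ᶜ.domRestrict (fun z => if h : z ∈ (range a)ᶜ then G (1, ⟨z, h⟩) else 0)
      = fun z => G (1, z) := by
      ext z; simp only [domRestrict_apply]; rw [dif_pos z.2]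
    rw [this]; fun_prop
  · intro z hz
    simp only [dif_pos hz]
    rw [← h1]; simp

lemma winding (ψ : ℝ → ℂ) (hψ : Continuous ψ) (hp : ψ (2 * Real.pi) = ψ 0) (k : ℤ) (c : ℂ)
    (h : ∀ θ, exp (ψ θ) = c * exp (k * (θ * I))) : k = 0 := by
  have hc : c = exp (ψ 0) := by simpa using (h 0).symm
  have hint : ∀ θ, ∃ n : ℤ, ψ θ - k * (θ * I) - ψ 0 = n * (2 * Real.pi * I) := by
    intro θ
    rw [← exp_eq_one_iff, exp_sub, exp_sub, h, hc]
    field_simp [exp_ne_zero]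
  choose n hn using hint
  have hpi : (2 * Real.pi * I : ℂ) ≠ 0 := by simp [Real.pi_ne_zero]
  have hcn : Continuous n := by
    have : Continuous (fun θ => ((n θ : ℝ))) := by
      have h2 : (fun θ => ((n θ : ℝ))) = fun θ => ((ψ θ - k * (θ * I) - ψ 0) / (2 * Real.pi * I)).re := by
        ext θ; rw [hn, mul_div_cancel_right₀ _ hpi]; simp
      rw [h2]; fun_prop
    exact Int.isClosedEmbedding_coe_real.isEmbedding.continuous_iff.2 this
  have hconst : n (2 * Real.pi) = n 0 := PreconnectedSpace.constant inferInstance hcn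
  have e1 := hn 0
  have e2 := hn (2 * Real.pi)
  rw [hconst, ← e1, hp] at e2
  have : (k : ℂ) * (2 * Real.pi * I) = 0 := by
    push_cast at e2; linear_combination -e2
  simpa [hpi, Real.pi_ne_zero] using this

/-- there is no log of ((z-x)/(z-y))^k on the complement of {x,y} -/
lemma no_log (x y : ℂ) (hxy : x ≠ y) (k : ℤ) (L : ℂ → ℂ) (hL : ContinuousOn L {x, y}ᶜ)
    (h : ∀ z ∈ ({x, y} : Set ℂ)ᶜ, exp (L z) = ((z - x) / (z - y)) ^ k) : k = 0 := by
  have hxy' : x - y ≠ 0 := sub_ne_zero.2 hxy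
  let w : ℝ → ℂ := fun θ => (x - y) / 2 * exp (θ * I)
  have hw : Continuous w := by fun_prop
  have hwn : ∀ θ, ‖w θ‖ = ‖x - y‖ / 2 := fun θ => by simp [w, norm_exp_ofReal_mul_I]
  have hs : ∀ θ : ℝ, 1 + exp (θ * I) / 2 ∈ slitPlane := by
    intro θ
    apply mem_slitPlane_of_norm_lt_one
    simp [norm_exp_ofReal_mul_I]; norm_num
  have hmem : ∀ θ, x + w θ ∈ ({x, y} : Set ℂ)ᶜ := by
    intro θ hh
    rcases hh with hh | hh
    · have : w θ = 0 := by linear_combination hh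
      simp [w, hxy', exp_ne_zero] at this
    · have : w θ = y - x := by rw [mem_singleton_iff] at hh; linear_combination hh
      have h2 := hwn θ
      rw [this, norm_sub_rev] at h2
      have := norm_pos_iff.2 hxy'
      linarith
  refine winding (fun θ => L (x + w θ) + k * log (1 + exp (θ * I) / 2)) ?_ ?_ k ((1/2) ^ k) ?_
  · apply Continuous.add
    · exact hL.comp_continuous (by fun_prop) hmem
    · apply Continuous.mul (by fun_prop)
      exact Continuous.clog (by fun_prop) hs
  · simp [w]
  · intro θ
    rw [exp_add, h _ (hmem θ), exp_int_mul, exp_int_mul, exp_log (slitPlane_ne_zero (hs θ)),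
      ← mul_zpow, ← mul_zpow]
    congr 1
    have h1 : x + w θ - y = (x - y) * (1 + exp (θ * I) / 2) := by simp only [w]; ring
    rw [h1]
    have := slitPlane_ne_zero (hs θ)
    simp only [w, add_sub_cancel_left]
    field_simp
    apply div_self
    intro h0; apply this; linear_combination h0 / 2

/-- gluing -/
lemma glue (x y : ℂ) (hxy : x ≠ y) (A B : Set ℂ) (hA : IsClosed A) (hB : IsClosed B)
    (hAB : A ∩ B ⊆ {x, y}) (c : ℤ) (g h : ℂ → ℂ) (hg : ContinuousOn g Aᶜ) (hh : ContinuousOn h Bᶜ)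
    (hg' : ∀ z ∈ Aᶜ, exp (g z) = ((z - x) / (z - y)) ^ c)
    (hh' : ∀ z ∈ Bᶜ, exp (h z) = ((z - x) / (z - y)) ^ c)
    (heq : ∀ z ∈ (A ∪ B)ᶜ, g z = h z) : c = 0 := by
  classical
  have hcov : ({x, y} : Set ℂ)ᶜ ⊆ Aᶜ ∪ Bᶜ := by
    rw [← compl_inter]; exact compl_subset_compl.2 hAB
  have key : ∀ z ∈ Bᶜ, (fun z => if z ∈ A then h z else g z) z = h z := by
    intro z hz
    by_cases hzA : z ∈ A
    · simp [hzA]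
    · simp only [hzA, if_false]; exact heq z (by simp only [mem_compl_iff, mem_union]; tauto)
  have key2 : ∀ z ∈ Aᶜ, (fun z => if z ∈ A then h z else g z) z = g z := by
    intro z hz
    simp only [mem_compl_iff] at hz
    simp [hz]
  refine no_log x y hxy c (fun z => if z ∈ A then h z else g z) ?_ ?_
  · refine ContinuousOn.mono ?_ hcov
    exact ContinuousOn.union_of_isOpen (hg.congr key2) (hh.congr key) hA.isOpen_compl hB.isOpen_compl
  · intro z hz
    rcases hcov hz with hz | hz
    · rw [← hg' z hz]; exact congrArg exp (key2 z hz)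
    · rw [← hh' z hz]; exact congrArg exp (key z hz)

lemma lower (a : Fin 3 → unitInterval → ℂ) (ha : ∀ j, Continuous (a j)) (x y : ℂ) (hxy : x ≠ y)
    (h0 : ∀ j, a j 0 = x) (h1 : ∀ j, a j 1 = y)
    (hd : ∀ i j, i ≠ j → range (a i) ∩ range (a j) ⊆ {x, y})
    (K : Set ℂ) (hK : K = ⋃ j, range (a j)) (hne : Nonempty ↥Kᶜ)
    (hfin : Finite (ConnectedComponents ↥Kᶜ)) : 3 ≤ Nat.card (ConnectedComponents ↥Kᶜ) := by
  by_contra hlt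
  push Not at hlt
  have hcl : ∀ j, IsClosed (range (a j)) := fun j => (isCompact_range (ha j)).isClosed
  have hsub : ∀ z ∈ Kᶜ, ∀ j, z ∈ (range (a j))ᶜ := by
    intro z hz j hj; apply hz; rw [hK]; exact mem_iUnion_of_mem j hj
  have hex := fun j => log_off_arc (a j) (ha j)
  simp only [h0, h1] at hex
  choose g hg hgexp using hex
  have hint : ∀ (j : Fin 3) (z : ↥Kᶜ), ∃ n : ℤ, g 0 z - g j z = n * (2 * Real.pi * I) := by
    intro j z
    rw [← exp_eq_one_iff, exp_sub, ← hgexp 0 z (hsub z z.2 0), ← hgexp j z (hsub z z.2 j)]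
    apply div_self
    rw [hgexp 0 z (hsub z z.2 0)]; exact exp_ne_zero _
  choose n hn using hint
  have hpi : (2 * Real.pi * I : ℂ) ≠ 0 := by simp [Real.pi_ne_zero]
  have hgc : ∀ j, Continuous (fun z : ↥Kᶜ => g j z) := fun j =>
    (hg j).comp_continuous continuous_subtype_val (fun z => hsub z z.2 j)
  have hcn : ∀ j, Continuous (n j) := by
    intro j
    have : Continuous (fun θ => ((n j θ : ℝ))) := by
      have h2 : (fun θ => ((n j θ : ℝ))) = fun θ : ↥Kᶜ => ((g 0 θ - g j θ) / (2 * Real.pi * I)).re := by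
        ext θ; rw [hn, mul_div_cancel_right₀ _ hpi]; simp
      rw [h2]
      exact continuous_re.comp (((hgc 0).sub (hgc j)).div_const _)
    exact Int.isClosedEmbedding_coe_real.isEmbedding.continuous_iff.2 this
  have hft := Fintype.ofFinite (ConnectedComponents ↥Kᶜ)
  let v : Fin 3 → (ConnectedComponents ↥Kᶜ → ℤ) :=
    ![fun _ => 1, (hcn 1).connectedComponentsLift, (hcn 2).connectedComponentsLift]
  have hli : ¬ LinearIndependent ℤ v := by
    intro h
    have := h.fintype_card_le_finrank
    rw [Module.finrank_fintype_fun_eq_card, ← Nat.card_eq_fintype_card (α := ConnectedComponents ↥Kᶜ)] at this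
    rw [Fintype.card_fin] at this; omega
  rw [Fintype.not_linearIndependent_iff] at hli
  obtain ⟨c, hc, hcne⟩ := hli
  have hrel : ∀ z : ↥Kᶜ, c 0 + c 1 * n 1 z + c 2 * n 2 z = 0 := by
    intro z
    have := congrFun hc (ConnectedComponents.mk z)
    simp only [Fin.sum_univ_three, v] at this
    simpa using this
  have hrel2 : ∀ z ∈ Kᶜ, c 0 * (2 * Real.pi * I) + c 1 * (g 0 z - g 1 z) + c 2 * (g 0 z - g 2 z) = 0 := by
    intro z hz
    have e1 := hn 1 ⟨z, hz⟩
    have e2 := hn 2 ⟨z, hz⟩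
    simp only at e1 e2
    rw [e1, e2]
    have : ((c 0 + c 1 * n 1 ⟨z, hz⟩ + c 2 * n 2 ⟨z, hz⟩ : ℤ) : ℂ) = 0 := by rw [hrel]; simp
    push_cast at this
    linear_combination (2 * Real.pi * I) * this
  have main : ∀ i j k : Fin 3, j ≠ i → j ≠ k → (∀ l, l = i ∨ l = j ∨ l = k) → ∀ c0 c1 c2 : ℤ,
      (∀ z ∈ Kᶜ, c0 * (2 * Real.pi * I) + c1 * (g i z - g j z) + c2 * (g i z - g k z) = 0) → c1 = 0 := by
    intro i j k hji hjk hall c0 c1 c2 hr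
    refine glue x y hxy (range (a j)) (range (a i) ∪ range (a k)) (hcl j) ((hcl i).union (hcl k))
      ?_ c1 (fun z => c1 * g j z) (fun z => c0 * (2 * Real.pi * I) + ((c1 + c2 : ℤ) * g i z + (-c2 : ℤ) * g k z))
      ?_ ?_ ?_ ?_ ?_
    · rw [inter_union_distrib_left]
      exact union_subset (hd _ _ hji) (hd _ _ hjk)
    · exact continuousOn_const.mul (hg j)
    · have e1 : ContinuousOn (g i) (range (a i) ∪ range (a k))ᶜ :=
        (hg i).mono (compl_subset_compl.2 subset_union_left)
      have e2 : ContinuousOn (g k) (range (a i) ∪ range (a k))ᶜ :=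
        (hg k).mono (compl_subset_compl.2 subset_union_right)
      fun_prop
    · intro z hz
      rw [exp_int_mul, hgexp j z hz]
    · intro z hz
      rw [compl_union] at hz
      rw [exp_add, exp_add, exp_int_mul_two_pi_mul_I, exp_int_mul, exp_int_mul, ← hgexp i z hz.1, ← hgexp k z hz.2, ← zpow_add₀, one_mul]
      · congr 1; ring
      · rw [hgexp i z hz.1]; exact exp_ne_zero _
    · intro z hz
      have hzK : z ∈ Kᶜ := by
        intro hzK
        rw [hK] at hzK
        obtain ⟨l, hl⟩ := mem_iUnion.1 hzK
        apply hz
        rcases hall l with rfl | rfl | rfl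
        · exact Or.inr (Or.inl hl)
        · exact Or.inl hl
        · exact Or.inr (Or.inr hl)
      have := hr z hzK
      push_cast
      linear_combination -this
  have c1 : c 1 = 0 := main 0 1 2 (by decide) (by decide) (by decide) _ _ _ hrel2
  have c2 : c 2 = 0 := main 0 2 1 (by decide) (by decide) (by decide) (c 0) (c 2) (c 1) (by
    intro z hz; linear_combination hrel2 z hz)
  have c0 : c 0 = 0 := by
    obtain ⟨z⟩ := hne
    have := hrel z
    simpa [c1, c2] using this
  obtain ⟨i, hi⟩ := hcne
  fin_cases i
  · exact hi c0
  · exact hi c1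
  · exact hi c2

lemma frontier_comp {K : Set ℂ} (hK : IsClosed K) (b : ℂ) :
    frontier (connectedComponentIn Kᶜ b) ⊆ K := by
  intro z hz
  by_contra hzK
  have hzK : z ∈ Kᶜ := hzK
  have hUo : IsOpen (connectedComponentIn Kᶜ b) := hK.isOpen_compl.connectedComponentIn
  have hVo : IsOpen (connectedComponentIn Kᶜ z) := hK.isOpen_compl.connectedComponentIn
  rw [hUo.frontier_eq] at hz
  obtain ⟨w, hw1, hw2⟩ := mem_closure_iff.1 hz.1 _ hVo (mem_connectedComponentIn hzK)
  apply hz.2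
  rw [connectedComponentIn_eq hw2, ← connectedComponentIn_eq hw1]
  exact mem_connectedComponentIn hzK

/-- independence -/
lemma indep {K : Set ℂ} (hK : IsCompact K) (b : Fin 3 → ℂ) (hb : ∀ i, b i ∈ Kᶜ)
    (hd : ∀ i j, i ≠ j → b i ∉ connectedComponentIn Kᶜ (b j)) (k : Fin 3 → ℤ) (g : ℂ → ℂ)
    (hg : ContinuousOn g K) (hgexp : ∀ z ∈ K, ∏ i, (z - b i) ^ k i = exp (g z)) (j : Fin 3)
    (hbd : Bornology.IsBounded (connectedComponentIn Kᶜ (b j))) : k j = 0 := by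
  classical
  set U := connectedComponentIn Kᶜ (b j) with hU
  have hUo : IsOpen U := hK.isClosed.isOpen_compl.connectedComponentIn
  have hfr : frontier U ⊆ K := frontier_comp hK.isClosed _
  have hjU : b j ∈ U := mem_connectedComponentIn (hb j)
  have hclU : ∀ i, i ≠ j → b i ∉ closure U := by
    intro i hi hcl
    rw [closure_eq_self_union_frontier] at hcl
    rcases hcl with h | h
    · exact hd i j hi h
    · exact hb i (hfr h)
  obtain ⟨G, hG⟩ := ContinuousMap.exists_restrict_eq hK.isClosed
    (⟨K.domRestrict g, continuousOn_iff_continuous_domRestrict.1 hg⟩ : C(K, ℂ))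
  have hGg : ∀ z ∈ K, G z = g z := fun z hz => congrArg (fun f => f ⟨z, hz⟩) hG
  let h : ℂ → ℂ := fun z => ∏ i ∈ Finset.univ.erase j, (z - b i) ^ k i
  have hh0 : ∀ z ∈ closure U, h z ≠ 0 := by
    intro z hz
    refine Finset.prod_ne_zero_iff.2 fun i hi => zpow_ne_zero _ (sub_ne_zero.2 ?_)
    rintro rfl
    exact hclU i (Finset.ne_of_mem_erase hi) hz
  have hhc : ContinuousOn h (closure U) := by
    refine continuousOn_finsetProd _ fun i hi => ?_
    refine ContinuousOn.zpow₀ (by fun_prop) _ fun z hz => Or.inl (sub_ne_zero.2 ?_)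
    rintro rfl
    exact hclU i (Finset.ne_of_mem_erase hi) hz
  have hsplit : ∀ z, ∏ i, (z - b i) ^ k i = (z - b j) ^ k j * h z := fun z =>
    (Finset.mul_prod_erase _ _ (Finset.mem_univ j)).symm
  have hnj : ∀ z, z ∉ U → z - b j ≠ 0 := by
    intro z hz h; rw [sub_eq_zero] at h; exact hz (h ▸ hjU)
  let F : ℂ → ℂ := fun z => if z ∈ U then exp (G z) / h z else (z - b j) ^ k j
  have hFc : Continuous F := by
    apply continuous_if
    · intro z hz
      have hzK : z ∈ K := hfr hz
      have h1 := hgexp z hzK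
      rw [hsplit] at h1
      rw [hGg z hzK, ← h1, mul_div_cancel_right₀]
      exact hh0 z (frontier_subset_closure hz)
    · exact ContinuousOn.div (by fun_prop) hhc hh0
    · refine ContinuousOn.zpow₀ (by fun_prop) _ fun z hz => Or.inl (hnj z ?_)
      change z ∈ closure Uᶜ at hz
      rwa [hUo.isClosed_compl.closure_eq] at hz
  have hF0 : ∀ z, F z ≠ 0 := by
    intro z
    by_cases hz : z ∈ U
    · simp only [F, hz, if_true]
      exact div_ne_zero (exp_ne_zero _) (hh0 z (subset_closure hz))
    · simp only [F, hz, if_false]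
      exact zpow_ne_zero _ (hnj z hz)
  obtain ⟨L, hL, hLF⟩ := log_plane F hFc hF0
  obtain ⟨R, hR⟩ := hbd.subset_ball (b j)
  have hout : ∀ θ : ℝ, b j + (|R| + 1 : ℝ) * exp (θ * I) ∉ U := by
    intro θ hz
    have := hR hz
    rw [mem_ball_iff_norm, add_sub_cancel_left, norm_mul, norm_exp_ofReal_mul_I, norm_real,
      Real.norm_eq_abs, abs_of_pos (by positivity)] at this
    have := le_abs_self R
    linarith
  refine winding (fun θ => L (b j + (|R| + 1 : ℝ) * exp (θ * I))) (by fun_prop) (by simp) (k j)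
    ((|R| + 1 : ℝ) ^ k j) ?_
  intro θ
  rw [← hLF]
  simp only [F, hout θ, if_false]
  rw [add_sub_cancel_left, mul_zpow, exp_int_mul]

lemma upper3 (a : Fin 3 → unitInterval → ℂ) (ha : ∀ j, Continuous (a j)) (x y : ℂ)
    (hinj : ∀ j, Function.Injective (a j))
    (h0 : ∀ j, a j 0 = x) (h1 : ∀ j, a j 1 = y)
    (hd : ∀ i j, i ≠ j → range (a i) ∩ range (a j) ⊆ {x, y})
    (K : Set ℂ) (hK : K = ⋃ j, range (a j)) (hKc : IsCompact K)
    (b : Fin 3 → ℂ) (hb : ∀ i, b i ∈ Kᶜ)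
    (hbd : ∀ i j, i ≠ j → b i ∉ connectedComponentIn Kᶜ (b j))
    (hbb : ∀ j, Bornology.IsBounded (connectedComponentIn Kᶜ (b j))) : False := by
  classical
  have hmem : ∀ j t, a j t ∈ K := fun j t => by rw [hK]; exact mem_iUnion_of_mem j ⟨t, rfl⟩
  have hne : ∀ i j t, a j t - b i ≠ 0 := fun i j t h => hb i (by
    rw [← sub_eq_zero.1 h]; exact hmem j t)
  have hex := fun i j => log_path (fun t => a j t - b i) (by have := ha j; fun_prop) (hne i j)
    (log (x - b i)) (by
      rw [exp_log]
      · rw [h0]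
      · have := hne i j 0; rwa [h0] at this)
  choose Λ hΛc hΛexp hΛ0 using hex
  have hint : ∀ i j, ∃ n : ℤ, Λ i j 1 - Λ i 0 1 = n * (2 * Real.pi * I) := by
    intro i j
    rw [← exp_eq_one_iff, exp_sub, ← hΛexp, ← hΛexp, h1, h1]
    apply div_self
    have := hne i j 1; rwa [h1] at this
  choose m hm using hint
  have hpi : (2 * Real.pi * I : ℂ) ≠ 0 := by simp [Real.pi_ne_zero]
  have hm0 : ∀ i, m i 0 = 0 := by
    intro i
    have := hm i 0
    rw [sub_self] at this
    have := (mul_eq_zero.1 this.symm).resolve_right hpi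
    exact_mod_cast this
  let w : Fin 3 → (Fin 2 → ℤ) := fun i => ![m i 1, m i 2]
  have hli : ¬ LinearIndependent ℤ w := by
    intro h
    have := h.fintype_card_le_finrank
    simp at this
  rw [Fintype.not_linearIndependent_iff] at hli
  obtain ⟨k, hk, i₀, hi₀⟩ := hli
  have hkm : ∀ j, ∑ i, k i * m i j = 0 := by
    intro j
    fin_cases j
    · simp [hm0]
    · simpa [w] using congrFun hk 0
    · simpa [w] using congrFun hk 1
  let M : Fin 3 → unitInterval → ℂ := fun j t => ∑ i, k i * Λ i j t
  have hMc : ∀ j, Continuous (M j) := fun j =>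
    continuous_finsetSum _ fun i _ => continuous_const.mul (hΛc i j)
  have hM0 : ∀ j, M j 0 = M 0 0 := fun j => by simp only [M, hΛ0]
  have hM1 : ∀ j, M j 1 = M 0 1 := fun j => by
    rw [← sub_eq_zero]
    simp only [M]
    rw [← Finset.sum_sub_distrib]
    have : ∀ i, (k i : ℂ) * Λ i j 1 - k i * Λ i 0 1 = ((k i * m i j : ℤ) : ℂ) * (2 * Real.pi * I) := by
      intro i; push_cast; rw [mul_assoc, ← hm]; ring
    simp only [this]
    rw [← Finset.sum_mul, ← Int.cast_sum, hkm]; simp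
  have hwd : ∀ j t j' t', a j t = a j' t' → M j t = M j' t' := by
    intro j t j' t' h
    by_cases hj : j = j'
    · subst hj; rw [hinj j h]
    · have : a j t ∈ ({x, y} : Set ℂ) := hd j j' hj ⟨⟨t, rfl⟩, ⟨t', h.symm⟩⟩
      rcases this with hx | hy
      · have e1 : t = 0 := hinj j (by rw [h0, hx])
        have e2 : t' = 0 := hinj j' (by rw [h0, ← h, hx])
        rw [e1, e2, hM0, hM0 j']
      · have e1 : t = 1 := hinj j (by rw [h1, hy])
        have e2 : t' = 1 := hinj j' (by rw [h1, ← h, hy])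
        rw [e1, e2, hM1, hM1 j']
  have hg : ∃ g : ℂ → ℂ, ∀ j t, g (a j t) = M j t := by
    refine ⟨fun z => if h : ∃ p : Fin 3 × unitInterval, a p.1 p.2 = z then
      M h.choose.1 h.choose.2 else 0, fun j t => ?_⟩
    have h : ∃ p : Fin 3 × unitInterval, a p.1 p.2 = a j t := ⟨(j, t), rfl⟩
    simp only [dif_pos h]
    exact hwd _ _ _ _ h.choose_spec
  obtain ⟨g, hg⟩ := hg
  have hKex : ∀ z ∈ K, ∃ j t, a j t = z := by
    intro z hz; rw [hK] at hz
    obtain ⟨j, t, h⟩ := mem_iUnion.1 hz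
    exact ⟨j, t, h⟩
  have hgc : ContinuousOn g K := by
    rw [continuousOn_iff_isClosed]
    intro T hT
    refine ⟨⋃ j, a j '' (M j ⁻¹' T), ?_, ?_⟩
    · exact isClosed_iUnion_of_finite fun j =>
        (((hT.preimage (hMc j)).isCompact).image (ha j)).isClosed
    · ext z
      constructor
      · rintro ⟨hz, hzK⟩
        refine ⟨?_, hzK⟩
        obtain ⟨j, t, rfl⟩ := hKex z hzK
        refine mem_iUnion_of_mem j ⟨t, ?_, rfl⟩
        rw [mem_preimage, ← hg]; exact hz
      · rintro ⟨hz, hzK⟩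
        refine ⟨?_, hzK⟩
        obtain ⟨j, t, ht, rfl⟩ := mem_iUnion.1 hz
        rw [mem_preimage, hg]; exact ht
  refine hi₀ (indep hKc b hb hbd k g hgc ?_ i₀ (hbb i₀))
  intro z hz
  obtain ⟨j, t, rfl⟩ := hKex z hz
  rw [hg]
  simp only [M]
  rw [exp_sum]
  refine Finset.prod_congr rfl fun i _ => ?_
  rw [exp_int_mul, ← hΛexp]

lemma exterior_preconnected (R : ℝ) : IsPreconnected {z : ℂ | R < ‖z‖} := by
  have h : {z : ℂ | R < ‖z‖} = (fun p : ℝ × ℝ => (p.1 : ℂ) * exp (p.2 * I)) '' (Ioi R ×ˢ univ) := by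
    ext z
    constructor
    · intro hz
      exact ⟨(‖z‖, arg z), ⟨hz, mem_univ _⟩, norm_mul_exp_arg_mul_I z⟩
    · rintro ⟨⟨r, θ⟩, ⟨hr, -⟩, rfl⟩
      have hr : R < r := hr
      simp only [mem_ofPred_eq, norm_mul, norm_exp_ofReal_mul_I, norm_real, Real.norm_eq_abs, mul_one]
      exact hr.trans_le (le_abs_self r)
  rw [h]
  exact (isPreconnected_Ioi.prod isPreconnected_univ).image _ (by fun_prop)

lemma three (a : Fin 3 → unitInterval → ℂ) (ha : ∀ j, Continuous (a j)) (x y : ℂ) (hxy : x ≠ y)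
    (hinj : ∀ j, Function.Injective (a j))
    (h0 : ∀ j, a j 0 = x) (h1 : ∀ j, a j 1 = y)
    (hd : ∀ i j, i ≠ j → range (a i) ∩ range (a j) ⊆ {x, y})
    (K : Set ℂ) (hK : K = ⋃ j, range (a j)) :
    Nat.card (ConnectedComponents ↥Kᶜ) = 3 := by
  classical
  have hKc : IsCompact K := by
    rw [hK]; exact isCompact_iUnion fun j => isCompact_range (ha j)
  obtain ⟨R, hR⟩ := hKc.isBounded.subset_closedBall 0
  have hR' : K ⊆ Metric.closedBall 0 |R| := hR.trans (Metric.closedBall_subset_closedBall (le_abs_self R))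
  have hE : {z : ℂ | |R| < ‖z‖} ⊆ Kᶜ := by
    intro z hz hzK
    have := hR' hzK
    rw [mem_closedBall_zero_iff] at this
    exact absurd hz (not_lt.2 this)
  let z0 : ℂ := (|R| + 1 : ℝ)
  have hz0 : z0 ∈ {z : ℂ | |R| < ‖z‖} := by
    simp only [z0, mem_ofPred_eq, norm_real, Real.norm_eq_abs]
    exact (lt_add_one |R|).trans_le (le_abs_self _)
  have hz0K := hE hz0
  have hcomp : ∀ u v : ↥Kᶜ, (u : ℂ) ∈ connectedComponentIn Kᶜ v →
      (ConnectedComponents.mk u) = ConnectedComponents.mk v := by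
    intro u v h
    rw [connectedComponentIn_eq_image v.2] at h
    obtain ⟨u', hu', h⟩ := h
    rw [Subtype.ext h] at hu'
    exact ConnectedComponents.coe_eq_coe'.2 hu'
  have hbdd : ∀ v : ↥Kᶜ, ConnectedComponents.mk v ≠ ConnectedComponents.mk (⟨z0, hz0K⟩ : ↥Kᶜ) →
      Bornology.IsBounded (connectedComponentIn Kᶜ (v : ℂ)) := by
    intro v hv
    refine (Metric.isBounded_closedBall (x := (0 : ℂ)) (r := |R|)).subset ?_
    intro z hz
    by_contra hzR
    rw [mem_closedBall_zero_iff, not_le] at hzR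
    apply hv
    symm
    apply hcomp
    change z0 ∈ _
    rw [connectedComponentIn_eq hz]
    exact (exterior_preconnected |R|).subset_connectedComponentIn hzR hE hz0
  have hno4 : ∀ s : Finset (ConnectedComponents ↥Kᶜ), s.card ≤ 3 := by
    intro s
    by_contra! hs
    have h3 : 2 < (s.erase (ConnectedComponents.mk (⟨z0, hz0K⟩ : ↥Kᶜ))).card := by
      have := Finset.pred_card_le_card_erase (s := s) (a := ConnectedComponents.mk (⟨z0, hz0K⟩ : ↥Kᶜ))
      omega
    obtain ⟨p, q, r, hp, hq, hr, hpq, hpr, hqr⟩ := Finset.two_lt_card_iff.1 h3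
    obtain ⟨p, rfl⟩ := ConnectedComponents.surjective_coe p
    obtain ⟨q, rfl⟩ := ConnectedComponents.surjective_coe q
    obtain ⟨r, rfl⟩ := ConnectedComponents.surjective_coe r
    let b : Fin 3 → ↥Kᶜ := ![p, q, r]
    refine upper3 a ha x y hinj h0 h1 hd K hK hKc (fun i => b i) (fun i => (b i).2) ?_ ?_
    · intro i j hij hmem
      have := hcomp _ _ hmem
      fin_cases i <;> fin_cases j <;> first
        | exact hij rfl
        | exact hpq this
        | exact hpq this.symm
        | exact hpr this
        | exact hpr this.symm
        | exact hqr this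
        | exact hqr this.symm
    · intro j
      apply hbdd
      fin_cases j
      · exact Finset.ne_of_mem_erase hp
      · exact Finset.ne_of_mem_erase hq
      · exact Finset.ne_of_mem_erase hr
  have hfin : Finite (ConnectedComponents ↥Kᶜ) := by
    by_contra hinf
    rw [not_finite_iff_infinite] at hinf
    obtain ⟨s, hs⟩ := Infinite.exists_subset_card_eq (ConnectedComponents ↥Kᶜ) 4
    have := hno4 s
    omega
  apply le_antisymm
  · have hft := Fintype.ofFinite (ConnectedComponents ↥Kᶜ)
    rw [Nat.card_eq_fintype_card]
    exact hno4 Finset.univ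
  · exact lower a ha x y hxy h0 h1 hd K hK ⟨⟨z0, hz0K⟩⟩ hfin

/-- transfer to the euclidean plane -/
lemma three_euclid (a : Fin 3 → unitInterval → EuclideanSpace ℝ (Fin 2)) (ha : ∀ j, Continuous (a j))
    (x y : EuclideanSpace ℝ (Fin 2)) (hxy : x ≠ y)
    (hinj : ∀ j, Function.Injective (a j))
    (h0 : ∀ j, a j 0 = x) (h1 : ∀ j, a j 1 = y)
    (hd : ∀ i j, i ≠ j → range (a i) ∩ range (a j) ⊆ {x, y})
    (K : Set (EuclideanSpace ℝ (Fin 2))) (hK : K = ⋃ j, range (a j)) :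
    Nat.card (ConnectedComponents ↥Kᶜ) = 3 := by
  let e : EuclideanSpace ℝ (Fin 2) ≃ₜ ℂ := Complex.orthonormalBasisOneI.repr.toHomeomorph.symm
  have h3 := three (fun j => e ∘ a j) (fun j => e.continuous.comp (ha j)) (e x) (e y)
    (e.injective.ne hxy) (fun j => e.injective.comp (hinj j)) (fun j => by simp [h0])
    (fun j => by simp [h1]) (fun i j hij => by
      rw [range_comp, range_comp, ← image_inter e.injective, ← image_pair]
      exact image_mono (hd i j hij)) (e '' K) (by rw [hK, image_iUnion]; simp only [range_comp])
  rw [← h3]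
  let f : ↥Kᶜ ≃ₜ ↥(e '' K)ᶜ := (e.image Kᶜ).trans (Homeomorph.setCongr (image_compl_eq e.bijective))
  refine Nat.card_congr ⟨f.continuous.connectedComponentsMap, f.symm.continuous.connectedComponentsMap, ?_, ?_⟩
  · intro u
    obtain ⟨u, rfl⟩ := ConnectedComponents.surjective_coe u
    change ConnectedComponents.mk (f.symm (f u)) = _
    simp
  · intro u
    obtain ⟨u, rfl⟩ := ConnectedComponents.surjective_coe u
    change ConnectedComponents.mk (f (f.symm u)) = _
    simp

end Theta


/-- **A consequence of the Jordan curve theorem.** Let `C ⊆ ℝ²` be a simple closed curve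
(the image of a continuous loop `γ : [0,1] → ℝ²` with `γ 0 = γ 1` that is injective on
`[0,1)`), let `x ≠ y` be two points of `C`, and let `P` be the image of an injective
continuous path `p : [0,1] → ℝ²` from `x` to `y` with `P ∩ C = {x, y}`. Then
`ℝ² \ (C ∪ P)` has exactly three connected components. -/
theorem jordan_curve_with_arc_three_components
    (γ : ℝ → EuclideanSpace ℝ (Fin 2)) (hγcont : ContinuousOn γ (Set.Icc 0 1))
    (hγloop : γ 0 = γ 1) (hγinj : Set.InjOn γ (Set.Ico 0 1))
    (C : Set (EuclideanSpace ℝ (Fin 2))) (hC : C = γ '' Set.Icc 0 1)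
    (x y : EuclideanSpace ℝ (Fin 2)) (hxy : x ≠ y) (hxC : x ∈ C) (hyC : y ∈ C)
    (p : ℝ → EuclideanSpace ℝ (Fin 2)) (hpcont : ContinuousOn p (Set.Icc 0 1))
    (hp0 : p 0 = x) (hp1 : p 1 = y) (hpinj : Set.InjOn p (Set.Icc 0 1))
    (P : Set (EuclideanSpace ℝ (Fin 2))) (hP : P = p '' Set.Icc 0 1)
    (hPC : P ∩ C = {x, y}) :
    Nat.card (ConnectedComponents ↥((C ∪ P)ᶜ)) = 3 := by
  classical
  -- periodic extension
  set Γ : ℝ → EuclideanSpace ℝ (Fin 2) := fun r => γ (Int.fract r) with hΓdef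
  have hΓc : Continuous Γ := hγcont.comp_fract'' hγloop
  have hΓeq : ∀ v w, Γ v = Γ w → ∃ n : ℤ, v - w = n := fun v w h =>
    Int.fract_eq_fract.1 (hγinj ⟨Int.fract_nonneg v, Int.fract_lt_one v⟩
      ⟨Int.fract_nonneg w, Int.fract_lt_one w⟩ h)
  have hΓ1 : ∀ v, Γ (v + 1) = Γ v := fun v => by simp [hΓdef]
  have hΓC : ∀ v, Γ v ∈ C := fun v => by
    rw [hC]; exact ⟨_, ⟨Int.fract_nonneg v, (Int.fract_lt_one v).le⟩, rfl⟩
  have hCex : ∀ z ∈ C, ∃ r, 0 ≤ r ∧ r < 1 ∧ Γ r = z := by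
    intro z hz
    rw [hC] at hz
    obtain ⟨r, hr, rfl⟩ := hz
    rcases eq_or_lt_of_le hr.2 with h | h
    · refine ⟨0, le_rfl, one_pos, ?_⟩
      simp only [hΓdef, Int.fract_zero, hγloop, h]
    · refine ⟨r, hr.1, h, ?_⟩
      simp only [hΓdef, Int.fract_eq_self.2 ⟨hr.1, h⟩]
  have hinj1 : ∀ v w, Γ v = Γ w → v - w < 1 → -1 < v - w → v = w := by
    intro v w h h1 h2
    obtain ⟨n, hn⟩ := hΓeq v w h
    rw [hn] at h1 h2
    have h1' : n < 1 := by exact_mod_cast h1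
    have h2' : -1 < n := by exact_mod_cast h2
    have : n = 0 := by omega
    rw [this] at hn
    simp at hn; linarith
  obtain ⟨s, hs0, hs1, hsx⟩ := hCex x hxC
  have hCex' : ∀ z ∈ C, ∃ r, s ≤ r ∧ r < s + 1 ∧ Γ r = z := by
    intro z hz
    obtain ⟨r, h0, h1, h2⟩ := hCex z hz
    rcases le_or_gt s r with h | h
    · exact ⟨r, h, by linarith, h2⟩
    · exact ⟨r + 1, by linarith, by linarith, by rw [hΓ1, h2]⟩
  obtain ⟨t, hst', hts, hty⟩ := hCex' y hyC
  have hst : s < t := lt_of_le_of_ne hst' (by rintro rfl; exact hxy (hsx.symm.trans hty))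
  let a : Fin 3 → unitInterval → EuclideanSpace ℝ (Fin 2) :=
    ![fun u => Γ (s + u * (t - s)), fun u => Γ (s + 1 - u * (s + 1 - t)), fun u => p u]
  have r0 : Set.range (a 0) = Γ '' Set.Icc s t := by
    ext z
    constructor
    · rintro ⟨u, rfl⟩
      refine ⟨s + u * (t - s), ⟨?_, ?_⟩, rfl⟩
      · nlinarith [u.2.1]
      · nlinarith [u.2.2]
    · rintro ⟨v, hv, rfl⟩
      refine ⟨⟨(v - s) / (t - s), div_nonneg (by linarith [hv.1]) (by linarith),
        (div_le_one (by linarith)).2 (by linarith [hv.2])⟩, ?_⟩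
      change Γ (s + (v - s) / (t - s) * (t - s)) = Γ v
      rw [div_mul_cancel₀ _ (by linarith)]; congr 1; ring
  have r1 : Set.range (a 1) = Γ '' Set.Icc t (s + 1) := by
    ext z
    constructor
    · rintro ⟨u, rfl⟩
      refine ⟨s + 1 - u * (s + 1 - t), ⟨?_, ?_⟩, rfl⟩
      · nlinarith [u.2.2]
      · nlinarith [u.2.1]
    · rintro ⟨v, hv, rfl⟩
      refine ⟨⟨(s + 1 - v) / (s + 1 - t), div_nonneg (by linarith [hv.2]) (by linarith),
        (div_le_one (by linarith)).2 (by linarith [hv.1])⟩, ?_⟩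
      change Γ (s + 1 - (s + 1 - v) / (s + 1 - t) * (s + 1 - t)) = Γ v
      rw [div_mul_cancel₀ _ (by linarith)]; congr 1; ring
  have r2 : Set.range (a 2) = P := by
    rw [hP]
    ext z
    constructor
    · rintro ⟨u, rfl⟩; exact ⟨u, u.2, rfl⟩
    · rintro ⟨u, hu, rfl⟩; exact ⟨⟨u, hu⟩, rfl⟩
  have r0C : Set.range (a 0) ⊆ C := by
    rw [r0]; rintro _ ⟨v, -, rfl⟩; exact hΓC v
  have r1C : Set.range (a 1) ⊆ C := by
    rw [r1]; rintro _ ⟨v, -, rfl⟩; exact hΓC v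
  have h01 : Set.range (a 0) ∩ Set.range (a 1) ⊆ {x, y} := by
    rw [r0, r1]
    rintro z ⟨⟨v, hv, rfl⟩, ⟨w, hw, hvw⟩⟩
    rcases eq_or_lt_of_le hv.1 with h | h
    · left; rw [← h, hsx]
    · right
      have := hinj1 w v hvw (by linarith [hw.2]) (by linarith [hw.1, hv.2])
      have : v = t := le_antisymm hv.2 (by linarith [hw.1])
      rw [Set.mem_singleton_iff, this, hty]
  have h02 : Set.range (a 0) ∩ Set.range (a 2) ⊆ {x, y} := by
    rw [r2, ← hPC]; exact fun z hz => ⟨hz.2, r0C hz.1⟩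
  have h12 : Set.range (a 1) ∩ Set.range (a 2) ⊆ {x, y} := by
    rw [r2, ← hPC]; exact fun z hz => ⟨hz.2, r1C hz.1⟩
  refine Theta.three_euclid a ?_ x y hxy ?_ ?_ ?_ ?_ (C ∪ P) ?_
  · intro j
    fin_cases j
    · exact hΓc.comp (by fun_prop)
    · exact hΓc.comp (by fun_prop)
    · exact hpcont.comp_continuous continuous_subtype_val (fun u => u.2)
  · intro j
    fin_cases j
    · intro u v huv
      have := hinj1 _ _ huv (by nlinarith [u.2.1, u.2.2, v.2.1, v.2.2])
        (by nlinarith [u.2.1, u.2.2, v.2.1, v.2.2])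
      apply Subtype.ext
      have h3 : (u : ℝ) * (t - s) = v * (t - s) := by linarith
      exact mul_right_cancel₀ (by linarith) h3
    · intro u v huv
      have := hinj1 _ _ huv (by nlinarith [u.2.1, u.2.2, v.2.1, v.2.2])
        (by nlinarith [u.2.1, u.2.2, v.2.1, v.2.2])
      apply Subtype.ext
      have h3 : (u : ℝ) * (s + 1 - t) = v * (s + 1 - t) := by linarith
      exact mul_right_cancel₀ (by linarith) h3
    · intro u v huv
      exact Subtype.ext (hpinj u.2 v.2 huv)
  · intro j
    fin_cases j
    · simpa [a] using hsx
    · simpa [a, hΓ1] using hsx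
    · simpa [a] using hp0
  · intro j
    fin_cases j
    · simpa [a] using hty
    · simpa [a] using hty
    · simpa [a] using hp1
  · intro i j hij
    fin_cases i <;> fin_cases j
    · exact absurd rfl hij
    · exact h01
    · exact h02
    · rw [Set.inter_comm]; exact h01
    · exact absurd rfl hij
    · exact h12
    · rw [Set.inter_comm]; exact h02
    · rw [Set.inter_comm]; exact h12
    · exact absurd rfl hij
  · have hU : (⋃ j, Set.range (a j)) = Set.range (a 0) ∪ Set.range (a 1) ∪ Set.range (a 2) := by
      ext z; simp only [Set.mem_iUnion, Fin.exists_fin_succ, Set.mem_union]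
      simp [or_assoc]
    rw [hU, r2]
    congr 1
    refine Set.Subset.antisymm ?_ (Set.union_subset r0C r1C)
    intro z hz
    obtain ⟨r, h1, h2, rfl⟩ := hCex' z hz
    rw [r0, r1]
    rcases le_total r t with h | h
    · exact Or.inl ⟨r, ⟨h1, h⟩, rfl⟩
    · exact Or.inr ⟨r, ⟨h, h2.le⟩, rfl⟩
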